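/- Let D be an ultrafilter on a set J and let Z' = ⟨S', P', C', I'⟩ be the ultrapower of Z with respect to D. For all X, Y ⊆ S' ∖ I' and all distinct x, y ∈ I': if X;Y contains some element going from x to y, then X;Y contains every element of S' going from x to y. In particular, the composition of two sets of diversity atoms of Z' splits no pair of distinct elements of I'. -/

import Mathlib

open FirstOrder FirstOrder.Language

/-- Relation symbols of the language of atom structures: a unary `I`,
a binary `C` and a ternary `P`. -/
inductive AtomRel : ℕ → Type
  | I : AtomRel 1
  | C : AtomRel 2
  | P : AtomRel 3

/-- The first-order language with one ternary relation symbol `P`, one binary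
relation symbol `C` and one unary relation symbol `I`. -/
def atomLang : FirstOrder.Language :=
  ⟨fun _ => Empty, AtomRel⟩

/-- Function symbols of the language of the term algebras: a constant `1'`,
unary symbols `−` (complement) and `⁻` (converse), binary symbols `+` and `;`. -/
inductive AlgFun : ℕ → Type
  | one : AlgFun 0
  | compl : AlgFun 1
  | conv : AlgFun 1
  | add : AlgFun 2
  | comp : AlgFun 2

/-- The first-order language with binary operations `+` and `;`, unary
operations `−` and `⁻`, and a constant `1'`. -/
def algLang : FirstOrder.Language :=
  ⟨AlgFun, fun _ => Empty⟩

section Generic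

variable {M : Type} [atomLang.Structure M]

/-- The interpretation of the unary relation symbol `I`. -/
def mI (a : M) : Prop := Structure.RelMap (L := atomLang) (AtomRel.I : atomLang.Relations 1) ![a]

/-- The interpretation of the binary relation symbol `C`. -/
def mC (a b : M) : Prop := Structure.RelMap (L := atomLang) (AtomRel.C : atomLang.Relations 2) ![a, b]

/-- The interpretation of the ternary relation symbol `P`. -/
def mP (a b c : M) : Prop := Structure.RelMap (L := atomLang) (AtomRel.P : atomLang.Relations 3) ![a, b, c]

/-- `X ; Y = {u : ∃ x ∈ X, y ∈ Y, P(x,y,u)}`. -/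
def sComp (X Y : Set M) : Set M := {u | ∃ x ∈ X, ∃ y ∈ Y, mP x y u}

/-- `X⁻ = {u : ∃ x ∈ X, C(x,u)}`. -/
def sConv (X : Set M) : Set M := {u | ∃ x ∈ X, mC x u}

/-- The set of elements satisfying `I`. -/
def idSet (M : Type) [atomLang.Structure M] : Set M := {a | mI a}

end Generic

/-- Membership in the term algebra: the smallest collection of subsets of `M`
containing all singletons and the set `I`, closed under binary union,
complementation, `;` and `⁻`. -/
inductive InTA (M : Type) [atomLang.Structure M] : Set M → Prop
  | sing (a : M) : InTA M {a}
  | idset : InTA M (idSet M)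
  | union {X Y : Set M} : InTA M X → InTA M Y → InTA M (X ∪ Y)
  | compl {X : Set M} : InTA M X → InTA M Xᶜ
  | comp {X Y : Set M} : InTA M X → InTA M Y → InTA M (sComp X Y)
  | conv {X : Set M} : InTA M X → InTA M (sConv X)

/-- The term algebra of an atom structure, as a type. -/
def TermAlg (M : Type) [atomLang.Structure M] : Type := {X : Set M // InTA M X}

/-- The term algebra as a structure in the language `algLang`:
`+` is union, `−` is complement, `;` and `⁻` are the operations defined from
`P` and `C`, and `1'` is the set `I`. -/
instance termAlgStructure (M : Type) [atomLang.Structure M] :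
    algLang.Structure (TermAlg M) where
  funMap := fun {_} f v =>
    match f with
    | .one => ⟨idSet M, InTA.idset⟩
    | .compl => ⟨(v 0).1ᶜ, InTA.compl (v 0).2⟩
    | .conv => ⟨sConv (v 0).1, InTA.conv (v 0).2⟩
    | .add => ⟨(v 0).1 ∪ (v 1).1, InTA.union (v 0).2 (v 1).2⟩
    | .comp => ⟨sComp (v 0).1 (v 1).1, InTA.comp (v 0).2 (v 1).2⟩
  RelMap := fun {_} r _ => r.elim

/-- `a` goes from `x` to `y` when `P(x,a,a)` and `P(a,y,a)`. -/
def goes {M : Type} [atomLang.Structure M] (a x y : M) : Prop := mP x a a ∧ mP a y a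

/-- `X` splits the pair `(x,y)` when some `a ∈ X` and some `b ∉ X` both go
from `x` to `y`. -/
def SplitsG {M : Type} [atomLang.Structure M] (X : Set M) (x y : M) : Prop :=
  ∃ a ∈ X, ∃ b ∉ X, goes a x y ∧ goes b x y

/-- The pair `(x,y)` is splitable when `x ≠ y` and at least two distinct
elements go from `x` to `y`. -/
def SplitableG {M : Type} [atomLang.Structure M] (x y : M) : Prop :=
  x ≠ y ∧ ∃ a b : M, a ≠ b ∧ goes a x y ∧ goes b x y

/-- Converse of a binary relation, as a set of pairs. -/
def relConv {U : Type} (R : Set (U × U)) : Set (U × U) := {p | (p.2, p.1) ∈ R}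

/-- Composition of binary relations, as sets of pairs. -/
def relComp {U : Type} (R T : Set (U × U)) : Set (U × U) :=
  {p | ∃ w, (p.1, w) ∈ R ∧ (w, p.2) ∈ T}

/-- An atom structure is completely representable. -/
def CompRep (M : Type) [atomLang.Structure M] : Prop :=
  ∃ (U : Type) (rep : M → Set (U × U)),
    (∀ a : M, (rep a).Nonempty) ∧
    (∀ a b : M, a ≠ b → Disjoint (rep a) (rep b)) ∧
    (⋃ a : M, rep a) = Set.univ ∧
    (∀ a : M, (mI a ↔ rep a ⊆ Set.diagonal U) ∧
      ((rep a ⊆ Set.diagonal U) ↔ (rep a ∩ Set.diagonal U).Nonempty)) ∧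
    (∀ a b : M, (mC a b ↔ rep b = relConv (rep a)) ∧
      ((rep b = relConv (rep a)) ↔ (rep b ∩ relConv (rep a)).Nonempty)) ∧
    (∀ a b c : M, (mP a b c ↔ rep c ⊆ relComp (rep a) (rep b)) ∧
      ((rep c ⊆ relComp (rep a) (rep b)) ↔ (rep c ∩ relComp (rep a) (rep b)).Nonempty))
/-- The atoms of the atom structure `Z`: identity atoms `id n i` (`i ≤ n`),
split atoms `r n k` and their converses `rc n k` (`1 ≤ k ≤ n`), and
atoms `w n i m j` (`i ≤ n`, `j ≤ m`).  Distinct constructor applications give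
pairwise distinct elements. -/
inductive Atom : Type
  | id : (n i : ℕ) → i ≤ n → Atom
  | r : (n k : ℕ) → 1 ≤ k → k ≤ n → Atom
  | rc : (n k : ℕ) → 1 ≤ k → k ≤ n → Atom
  | w : (n i m j : ℕ) → i ≤ n → j ≤ m → Atom

/-- The domain function of `Z`. -/
def Atom.dom : Atom → Atom
  | .id n i h => .id n i h
  | .r n _ _ _ => .id n 0 (Nat.zero_le n)
  | .rc n k _ h2 => .id n k h2
  | .w n i _ _ hi _ => .id n i hi

/-- The range function of `Z`. -/
def Atom.rg : Atom → Atom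
  | .id n i h => .id n i h
  | .r n k _ h2 => .id n k h2
  | .rc n _ _ _ => .id n 0 (Nat.zero_le n)
  | .w _ _ m j _ hj => .id m j hj

/-- Membership in the set `I` of identity atoms of `Z`. -/
def Atom.isId : Atom → Prop
  | .id _ _ _ => True
  | _ => False

/-- The converse function on atoms of `Z`. -/
def Atom.cnv : Atom → Atom
  | .id n i h => .id n i h
  | .r n k h1 h2 => .rc n k h1 h2
  | .rc n k h1 h2 => .r n k h1 h2
  | .w n i m j hi hj => .w m j n i hj hi

/-- The binary relation `C` of `Z`: it consists of the pairs `(x,x)` for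
`x ∈ I`, `(r n k, rc n k)`, `(rc n k, r n k)` and `(w n i m j, w m j n i)`,
i.e. exactly the pairs `(a, cnv a)`. -/
def Crel (a b : Atom) : Prop := b = Atom.cnv a

/-- The ternary relation `P` of `Z`: the triples `(dom a, a, a)` and
`(a, rg a, a)` for `a ∈ S`, the triples `(a, b, dom a)` for `(a,b) ∈ C`, and
the triples `(a,b,c)` of non-identity atoms with `dom a = dom c`,
`rg a = dom b`, `rg b = rg c`. -/
def Prel (a b c : Atom) : Prop :=
  (a = b.dom ∧ c = b) ∨
  (b = a.rg ∧ c = a) ∨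
  (Crel a b ∧ c = a.dom) ∨
  (¬ a.isId ∧ ¬ b.isId ∧ ¬ c.isId ∧ a.dom = c.dom ∧ a.rg = b.dom ∧ b.rg = c.rg)

/-- `Z` as a structure for the language `atomLang`. -/
instance atomStructureZ : atomLang.Structure Atom where
  funMap := fun {_} f _ => f.elim
  RelMap := fun {_} r v =>
    match r with
    | AtomRel.I => (v 0).isId
    | AtomRel.C => Crel (v 0) (v 1)
    | AtomRel.P => Prel (v 0) (v 1) (v 2)

/-- `X ⊆ S` splits the pair `(x,y)` if there are `a ∈ X` and `b ∉ X` with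
`dom a = dom b = x` and `rg a = rg b = y`. -/
def Splits (X : Set Atom) (x y : Atom) : Prop :=
  ∃ a ∈ X, ∃ b ∉ X, a.dom = x ∧ a.rg = y ∧ b.dom = x ∧ b.rg = y

/-- The pair `(x,y)` is splitable if `x ≠ y` and there are two distinct
elements `a ≠ b` of `S` with `dom a = dom b = x` and `rg a = rg b = y`. -/
def Splitable (x y : Atom) : Prop :=
  x ≠ y ∧ ∃ a b : Atom, a ≠ b ∧ a.dom = x ∧ a.rg = y ∧ b.dom = x ∧ b.rg = y

/-- The ultrapower `Z'` of the atom structure `Z` with respect to an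
ultrafilter `D` on `J`. -/
def UPow (J : Type) (D : Ultrafilter J) : Type :=
  (D : Filter J).Product (fun _ : J => Atom)

/-- The ultraproduct structure on the ultrapower of `Z`. -/
instance uPowStructure (J : Type) (D : Ultrafilter J) : atomLang.Structure (UPow J D) :=
  inferInstanceAs (atomLang.Structure ((D : Filter J).Product fun _ : J => Atom))

/-!
In `Z`, if `P(a,b,c)` then `dom c = dom a`, `rg a = dom b` and `rg c = rg b`, and for diversity
atoms these equations are also sufficient. So whether a diversity atom `c` lies in the composition
of two diversity atoms depends only on the endpoints of `c`, and an atom going from `x` to `y ≠ x`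
is a diversity atom. This is a universal first-order property, hence it passes to ultrapowers; in
any structure satisfying it, a composition of sets of diversity atoms splits no pair `x ≠ y`.
-/

/-- The first-order property behind non-splitting: whether an element `u` going from `x` to `y ≠ x`
is in the composition of two given diversity elements depends on `x` and `y` only. -/
def CompRespectsEndpoints (M : Type) [atomLang.Structure M] : Prop :=
  ∀ ⦃a b u v x y : M⦄, ¬ mI a → ¬ mI b → x ≠ y → goes u x y → goes v x y → mP a b u → mP a b v

namespace CompRespectsEndpoints

variable {M : Type} [atomLang.Structure M] {X Y : Set M} {x y : M}

theorem mem_sComp (hM : CompRespectsEndpoints M) (hX : ∀ a ∈ X, ¬ mI a) (hY : ∀ b ∈ Y, ¬ mI b)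
    (hxy : x ≠ y) {u v : M} (huXY : u ∈ sComp X Y) (hu : goes u x y) (hv : goes v x y) :
    v ∈ sComp X Y := by
  obtain ⟨a, ha, b, hb, habu⟩ := huXY
  exact ⟨a, ha, b, hb, hM (hX a ha) (hY b hb) hxy hu hv habu⟩

theorem not_splitsG_sComp (hM : CompRespectsEndpoints M) (hX : ∀ a ∈ X, ¬ mI a)
    (hY : ∀ b ∈ Y, ¬ mI b) (hxy : x ≠ y) : ¬ SplitsG (sComp X Y) x y := by
  rintro ⟨u, huXY, v, hvXY, hu, hv⟩
  exact hvXY (hM.mem_sComp hX hY hxy huXY hu hv)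

end CompRespectsEndpoints

-- `FinVec.map g ![a, b, c]` reduces to `![g a, g b, g c]`, whereas `fun k => g (![a, b, c] k)` is
-- not definitionally a vector literal.
theorem relMap_product_mk {L : Language} {α : Type*} {M : α → Type*} [∀ i, L.Structure (M i)]
    {D : Ultrafilter α} {n : ℕ} (R : L.Relations n) (f : Fin n → ∀ i, M i) :
    Structure.RelMap R (FinVec.map (fun a : ∀ i, M i => (a : (D : Filter α).Product M)) f) ↔
      ∀ᶠ i in D, Structure.RelMap R (FinVec.map (fun a : ∀ i, M i => a i) f) := by
  simp only [FinVec.map_eq]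
  exact relMap_quotient_mk' ((D : Filter α).productSetoid M) R f

theorem product_mk_ne_iff {α : Type*} {M : α → Type*} {D : Ultrafilter α} (a b : ∀ i, M i) :
    (a : (D : Filter α).Product M) ≠ (b : (D : Filter α).Product M) ↔ ∀ᶠ i in D, a i ≠ b i :=
  (not_congr Quotient.eq'').trans Ultrafilter.eventually_not.symm

section Ultraproduct

variable {J : Type} {D : Ultrafilter J} {M : J → Type} [∀ j, atomLang.Structure (M j)]

theorem mI_product_mk (a : ∀ j, M j) :
    mI (a : (D : Filter J).Product M) ↔ ∀ᶠ j in D, mI (a j) :=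
  relMap_product_mk (L := atomLang) .I ![a]

theorem mP_product_mk (a b c : ∀ j, M j) :
    mP (a : (D : Filter J).Product M) (b : (D : Filter J).Product M)
        (c : (D : Filter J).Product M) ↔ ∀ᶠ j in D, mP (a j) (b j) (c j) :=
  relMap_product_mk (L := atomLang) .P ![a, b, c]

theorem goes_product_mk (a x y : ∀ j, M j) :
    goes (a : (D : Filter J).Product M) (x : (D : Filter J).Product M)
        (y : (D : Filter J).Product M) ↔ ∀ᶠ j in D, goes (a j) (x j) (y j) := by
  simp only [goes, mP_product_mk, Filter.eventually_and]

theorem CompRespectsEndpoints.product (hM : ∀ᶠ j in D, CompRespectsEndpoints (M j)) :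
    CompRespectsEndpoints ((D : Filter J).Product M) := by
  rintro ⟨a⟩ ⟨b⟩ ⟨u⟩ ⟨v⟩ ⟨x⟩ ⟨y⟩ ha hb hxy hu hv habu
  have ha := Ultrafilter.eventually_not.2 (mt (mI_product_mk a).2 ha)
  have hb := Ultrafilter.eventually_not.2 (mt (mI_product_mk b).2 hb)
  refine (mP_product_mk a b v).2 ?_
  filter_upwards [hM, ha, hb, (product_mk_ne_iff x y).1 hxy, (goes_product_mk u x y).1 hu,
    (goes_product_mk v x y).1 hv, (mP_product_mk a b u).1 habu]
    with j hMj haj hbj hxyj huj hvj habuj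
  exact hMj haj hbj hxyj huj hvj habuj

end Ultraproduct

namespace Atom

theorem isId_dom (a : Atom) : a.dom.isId := by cases a <;> trivial

theorem isId_rg (a : Atom) : a.rg.isId := by cases a <;> trivial

theorem dom_of_isId {a : Atom} (ha : a.isId) : a.dom = a := by
  cases a <;> first | rfl | exact ha.elim

theorem rg_of_isId {a : Atom} (ha : a.isId) : a.rg = a := by
  cases a <;> first | rfl | exact ha.elim

theorem cnv_of_isId {a : Atom} (ha : a.isId) : a.cnv = a := by
  cases a <;> first | rfl | exact ha.elim

theorem dom_cnv (a : Atom) : a.cnv.dom = a.rg := by cases a <;> rfl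

theorem rg_cnv (a : Atom) : a.cnv.rg = a.dom := by cases a <;> rfl

theorem cnv_cnv (a : Atom) : a.cnv.cnv = a := by cases a <;> rfl

end Atom

namespace Prel

variable {a b c : Atom}

theorem dom_eq (h : Prel a b c) : a.dom = c.dom := by
  rcases h with ⟨rfl, rfl⟩ | ⟨_, rfl⟩ | ⟨_, rfl⟩ | ⟨_, _, _, h, _, _⟩
  · exact Atom.dom_of_isId c.isId_dom
  · rfl
  · exact (Atom.dom_of_isId a.isId_dom).symm
  · exact h

theorem rg_eq_dom (h : Prel a b c) : a.rg = b.dom := by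
  rcases h with ⟨rfl, _⟩ | ⟨rfl, _⟩ | ⟨rfl, _⟩ | ⟨_, _, _, _, h, _⟩
  · exact Atom.rg_of_isId b.isId_dom
  · exact (Atom.dom_of_isId a.isId_rg).symm
  · exact a.dom_cnv.symm
  · exact h

theorem rg_eq (h : Prel a b c) : b.rg = c.rg := by
  rcases h with ⟨_, rfl⟩ | ⟨rfl, rfl⟩ | ⟨rfl, rfl⟩ | ⟨_, _, _, _, _, h⟩
  · rfl
  · exact Atom.rg_of_isId c.isId_rg
  · exact a.rg_cnv.trans (Atom.rg_of_isId a.isId_dom).symm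
  · exact h

theorem eq_cnv (h : Prel a b c) (hc : c.isId) : b = a.cnv := by
  rcases h with ⟨rfl, rfl⟩ | ⟨rfl, rfl⟩ | ⟨h, _⟩ | ⟨_, _, hc', _⟩
  · rw [Atom.dom_of_isId hc, Atom.cnv_of_isId hc]
  · rw [Atom.rg_of_isId hc, Atom.cnv_of_isId hc]
  · exact h
  · exact absurd hc hc'

end Prel

namespace Atom

variable {u x y : Atom}

theorem goes_iff_prel : goes u x y ↔ Prel x u u ∧ Prel u y u := Iff.rfl

theorem dom_eq_of_goes (h : goes u x y) : u.dom = x.dom := (goes_iff_prel.1 h).1.dom_eq.symm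

theorem rg_eq_of_goes (h : goes u x y) : u.rg = y.rg := (goes_iff_prel.1 h).2.rg_eq.symm

theorem not_isId_of_goes (hxy : x ≠ y) (h : goes u x y) : ¬ u.isId := by
  intro hu
  obtain ⟨hxu, huy⟩ := goes_iff_prel.1 h
  have hx : x = u := by rw [← x.cnv_cnv, ← hxu.eq_cnv hu, cnv_of_isId hu]
  have hy : y = u := by rw [huy.eq_cnv hu, cnv_of_isId hu]
  exact hxy (hx.trans hy.symm)

theorem compRespectsEndpoints : CompRespectsEndpoints Atom := by
  intro a b u v x y ha hb hxy hu hv (habu : Prel a b u)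
  have hdom : u.dom = v.dom := (dom_eq_of_goes hu).trans (dom_eq_of_goes hv).symm
  have hrg : u.rg = v.rg := (rg_eq_of_goes hu).trans (rg_eq_of_goes hv).symm
  exact Or.inr <| Or.inr <| Or.inr ⟨ha, hb, not_isId_of_goes hxy hv,
    habu.dom_eq.trans hdom, habu.rg_eq_dom, habu.rg_eq.trans hrg⟩

end Atom

theorem UPow.compRespectsEndpoints (J : Type) (D : Ultrafilter J) :
    CompRespectsEndpoints (UPow J D) :=
  CompRespectsEndpoints.product (.of_forall fun _ => Atom.compRespectsEndpoints)

theorem stmt_15_general (J : Type) (D : Ultrafilter J) (X Y : Set (UPow J D))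
    (hX : ∀ a ∈ X, ¬ mI a) (hY : ∀ a ∈ Y, ¬ mI a) (x y : UPow J D) (hxy : x ≠ y) :
    ((∃ u ∈ sComp X Y, goes u x y) → ∀ v : UPow J D, goes v x y → v ∈ sComp X Y) ∧
      ¬ SplitsG (sComp X Y) x y := by
  have hZ' := UPow.compRespectsEndpoints J D
  refine ⟨?_, hZ'.not_splitsG_sComp hX hY hxy⟩
  rintro ⟨u, huXY, hu⟩ v hv
  exact hZ'.mem_sComp hX hY hxy huXY hu hv

/-- In any ultrapower `Z'` of `Z`: for all `X, Y ⊆ S' ∖ I'` and all distinct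
`x, y ∈ I'`, if `X;Y` contains some element going from `x` to `y`, then `X;Y`
contains every element of `S'` going from `x` to `y`.  In particular, the
composition of two sets of diversity atoms of `Z'` splits no pair of distinct
elements of `I'`. -/
theorem stmt_15 (J : Type) (D : Ultrafilter J) (X Y : Set (UPow J D))
    (hX : ∀ a ∈ X, ¬ mI a) (hY : ∀ a ∈ Y, ¬ mI a)
    (x y : UPow J D) (hx : mI x) (hy : mI y) (hxy : x ≠ y) :
    ((∃ u ∈ sComp X Y, goes u x y) →
      ∀ v : UPow J D, goes v x y → v ∈ sComp X Y) ∧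
    ¬ SplitsG (sComp X Y) x y :=
  stmt_15_general J D X Y hX hY x y hxy
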